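/- arXiv:1705.09133 — 2 statements merged into one kernel-verified Lean document; each statement's English description precedes it below -/
import Mathlib

section
/- Let n ≥ 1, let (γ_{ij})_{1≤i,j≤n} be real numbers with γ_{ij} = γ_{ji}, let L_i(u_1,…,u_n) = γ_{i1}u_1 + ⋯ + γ_{in}u_n, and let a_1,…,a_n > 1 be real numbers. For Z > 0 let N(Z) denote the number of integer vectors (u_1,…,u_{2n}) ∈ ℤ^{2n} satisfying |u_i| < a_i Z and |L_i(u_1,…,u_n) - u_{n+i}| < a_i^{-1} Z for all 1 ≤ i ≤ n. Then there is a constant C depending only on n such that for all real numbers 0 < Z_1 ≤ Z_2 ≤ 1 one has N(Z_2) ≤ C·(Z_2/Z_1)^n·N(Z_1). -/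
/-!
Rescaling by the `a i` turns the integer points into a subgroup `Λ` of `ℝⁿ × ℝⁿ` with its sup norm,
and `N Z` counts the points of `Λ` in the ball of radius `Z`.

Because `γ` is symmetric, the standard symplectic form `symp` takes integer values on `Λ`
(`symp_scaleHom`). Two points of norm at most `1 / (2n)` have symplectic product smaller than `1`
in absolute value, so it vanishes; hence the points of `Λ` of norm at most `1 / (2n)` span an
isotropic subspace, of dimension at most `n` (`finrank_le_of_isotropic`).

If the points of `Λ` of norm less than `R` lie in a subspace of dimension `d`, a packing argument
with Haar measure shows that a maximal `r`-separated set of them has at most `(3R/r)^d` elements,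
and each of the other points lies within `r` of one of these. So
`#(Λ ∩ B(R)) ≤ (3R/r)^d * #(Λ ∩ B(r))` (`card_le_of_mem_submodule`). This is applied twice: with the
whole space (`d = 2n`) to pass from radius `Z₂` to `Z₂ / (2n)` at bounded cost, and then with the
isotropic subspace (`d ≤ n`) to pass from `Z₂ / (2n)` to `Z₁`.
-/

open MeasureTheory Module in
/-- Packing bound: the balls of radius `r / 2` around the points are disjoint and lie in the ball of
radius `R + r / 2 ≤ 3 R / 2`. -/
theorem card_le_of_separated {ι F : Type*} [NormedAddCommGroup F] [NormedSpace ℝ F]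
    [FiniteDimensional ℝ F] (T : Finset ι) (f : ι → F) {r R : ℝ} (hr : 0 < r) (hrR : r ≤ R)
    (hT : ∀ t ∈ T, ‖f t‖ < R) (hsep : ∀ s ∈ T, ∀ t ∈ T, s ≠ t → r ≤ ‖f s - f t‖) :
    (T.card : ℝ) ≤ (3 * R / r) ^ finrank ℝ F := by
  let _ : MeasurableSpace F := borel F
  have _ : BorelSpace F := ⟨rfl⟩
  let μ : Measure F := Measure.addHaar
  set d := finrank ℝ F
  have hdisj : (T : Set ι).PairwiseDisjoint (fun t => Metric.ball (f t) (r / 2)) := by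
    intro s hs t ht hst
    apply Metric.ball_disjoint_ball
    rw [dist_eq_norm]
    linarith [hsep s hs t ht hst]
  have hsub : (⋃ t ∈ T, Metric.ball (f t) (r / 2)) ⊆ Metric.ball (0 : F) (3 * R / 2) := by
    refine Set.iUnion₂_subset fun t ht => Metric.ball_subset_ball' ?_
    rw [dist_zero_right]
    linarith [hT t ht]
  have h := measure_mono (μ := μ) hsub
  rw [measure_biUnion_finset hdisj (fun _ _ => measurableSet_ball)] at h
  simp only [Measure.addHaar_ball_of_pos μ _ (half_pos hr),
    Measure.addHaar_ball_of_pos μ _ (show 0 < 3 * R / 2 by linarith)] at h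
  rw [Finset.sum_const, nsmul_eq_mul, ← mul_assoc] at h
  have h1 : μ (Metric.ball (0 : F) 1) ≠ 0 := (Metric.measure_ball_pos μ _ one_pos).ne'
  have h2 : μ (Metric.ball (0 : F) 1) ≠ ⊤ := measure_ball_lt_top.ne
  rw [ENNReal.mul_le_mul_iff_left h1 h2, ← ENNReal.ofReal_natCast,
    ← ENNReal.ofReal_mul (by positivity),
    ENNReal.ofReal_le_ofReal_iff (pow_nonneg (by linarith) _)] at h
  have : (3 * R / r) ^ d = (3 * R / 2) ^ d / (r / 2) ^ d := by
    rw [← div_pow]; congr 1; field_simp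
  rw [this, le_div_iff₀ (by positivity)]
  exact h

open Module in
/-- Points of a subgroup in a ball of radius `R`, all lying in a subspace `V`: a maximal
`r`-separated subset has at most `(3 R / r) ^ dim V` elements, and every point differs from one of
these by a point of norm less than `r`. -/
theorem card_le_of_mem_submodule {G E : Type*} [AddCommGroup G] [NormedAddCommGroup E]
    [NormedSpace ℝ E] [FiniteDimensional ℝ E] (φ : G →+ E) (V : Submodule ℝ E) {r R : ℝ}
    (hr : 0 < r) (hrR : r ≤ R) (hfin : {g | ‖φ g‖ < R}.Finite)
    (hV : ∀ g, ‖φ g‖ < R → φ g ∈ V) :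
    ({g | ‖φ g‖ < R}.ncard : ℝ) ≤ (3 * R / r) ^ finrank ℝ V * ({g | ‖φ g‖ < r}.ncard : ℝ) := by
  classical
  have hfin' : {g | ‖φ g‖ < r}.Finite := hfin.subset fun g (hg : _ < _) => hg.trans_le hrR
  let S := hfin.toFinset
  let S' := hfin'.toFinset
  have hS : ∀ g, g ∈ S ↔ ‖φ g‖ < R := fun g => by simp [S]
  have hS' : ∀ g, g ∈ S' ↔ ‖φ g‖ < r := fun g => by simp [S']
  let P := S.powerset.filter fun T => ∀ s ∈ T, ∀ t ∈ T, s ≠ t → r ≤ ‖φ s - φ t‖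
  obtain ⟨T, hTP, hmax⟩ := Finset.exists_max_image P Finset.card ⟨∅, by simp [P]⟩
  simp only [P, Finset.mem_filter, Finset.mem_powerset] at hTP hmax
  obtain ⟨hTS, hsep⟩ := hTP
  have hcover : S ⊆ T.biUnion fun t => S'.image (t + ·) := by
    intro g hg
    by_contra hcon
    have hfar : ∀ t ∈ T, r ≤ ‖φ g - φ t‖ := by
      intro t ht
      by_contra! hlt
      refine hcon (Finset.mem_biUnion.2 ⟨t, ht, Finset.mem_image.2 ⟨g - t, ?_, by abel⟩⟩)
      rwa [hS', map_sub]
    have hgT : g ∉ T := fun h => by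
      have := hfar g h
      rw [sub_self, norm_zero] at this
      linarith
    have := hmax (insert g T) ⟨Finset.insert_subset hg hTS, by
      intro s hs t ht hst
      rcases Finset.mem_insert.1 hs with rfl | hs' <;>
        rcases Finset.mem_insert.1 ht with rfl | ht'
      · exact absurd rfl hst
      · exact hfar t ht'
      · rw [norm_sub_rev]; exact hfar s hs'
      · exact hsep s hs' t ht' hst⟩
    rw [Finset.card_insert_of_notMem hgT] at this
    omega
  have hcard : S.card ≤ T.card * S'.card :=
    (Finset.card_le_card hcover).trans
      (Finset.card_biUnion_le_card_mul _ _ _ fun t _ => Finset.card_image_le)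
  have hmemV : ∀ t ∈ T, φ t ∈ V := fun t ht => hV t ((hS t).1 (hTS ht))
  have hpack : (T.card : ℝ) ≤ (3 * R / r) ^ finrank ℝ V := by
    have := card_le_of_separated (F := V) T.attach (fun t => ⟨φ t.1, hmemV t.1 t.2⟩) hr hrR
      (fun t _ => (hS t.1).1 (hTS t.2))
      (fun s _ t _ hst => hsep s.1 s.2 t.1 t.2 fun h => hst (Subtype.ext h))
    simpa using this
  rw [Set.ncard_eq_toFinset_card _ hfin, Set.ncard_eq_toFinset_card _ hfin']
  calc (S.card : ℝ) ≤ T.card * S'.card := by exact_mod_cast hcard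
    _ ≤ _ := by gcongr

/-- The standard symplectic form on `ℝⁿ × ℝⁿ`. -/
noncomputable def symp (n : ℕ) :
    LinearMap.BilinForm ℝ ((Fin n → ℝ) × (Fin n → ℝ)) :=
  LinearMap.mk₂ ℝ (fun x y => ∑ i, (x.1 i * y.2 i - x.2 i * y.1 i))
    (fun x y z => by
      rw [← Finset.sum_add_distrib]
      exact Finset.sum_congr rfl fun i _ => by simp; ring)
    (fun c x y => by
      rw [smul_eq_mul, Finset.mul_sum]
      exact Finset.sum_congr rfl fun i _ => by simp; ring)
    (fun x y z => by
      rw [← Finset.sum_add_distrib]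
      exact Finset.sum_congr rfl fun i _ => by simp; ring)
    (fun c x y => by
      rw [smul_eq_mul, Finset.mul_sum]
      exact Finset.sum_congr rfl fun i _ => by simp; ring)

theorem symp_apply (n : ℕ) (x y : (Fin n → ℝ) × (Fin n → ℝ)) :
    symp n x y = ∑ i, (x.1 i * y.2 i - x.2 i * y.1 i) := rfl

theorem symp_isRefl (n : ℕ) : (symp n).IsRefl := by
  intro x y h
  rw [symp_apply] at *
  rw [← neg_eq_zero, ← h, ← Finset.sum_neg_distrib]
  exact Finset.sum_congr rfl fun i _ => by ring

theorem symp_nondegenerate (n : ℕ) : (symp n).Nondegenerate := by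
  refine (LinearMap.IsRefl.nondegenerate_iff_separatingLeft (symp_isRefl n)).2 ?_
  intro x hx
  ext i
  · have := hx (0, Pi.single i 1)
    simpa [symp_apply, Pi.single_apply] using this
  · have := hx (Pi.single i 1, 0)
    simpa [symp_apply, Pi.single_apply] using this

theorem abs_symp_le (n : ℕ) (x y : (Fin n → ℝ) × (Fin n → ℝ)) :
    |symp n x y| ≤ 2 * n * (‖x‖ * ‖y‖) := by
  have h1 : ∀ (z : (Fin n → ℝ) × (Fin n → ℝ)) i, |z.1 i| ≤ ‖z‖ := fun z i =>
    (norm_le_pi_norm z.1 i).trans (norm_fst_le z)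
  have h2 : ∀ (z : (Fin n → ℝ) × (Fin n → ℝ)) i, |z.2 i| ≤ ‖z‖ := fun z i =>
    (norm_le_pi_norm z.2 i).trans (norm_snd_le z)
  rw [symp_apply]
  calc _ ≤ ∑ i : Fin n, |x.1 i * y.2 i - x.2 i * y.1 i| := Finset.abs_sum_le_sum_abs _ _
    _ ≤ ∑ i : Fin n, (‖x‖ * ‖y‖ + ‖x‖ * ‖y‖) := by
      refine Finset.sum_le_sum fun i _ => (abs_sub _ _).trans ?_
      rw [abs_mul, abs_mul]
      exact add_le_add
        (mul_le_mul (h1 x i) (h2 y i) (abs_nonneg _) (norm_nonneg _))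
        (mul_le_mul (h2 x i) (h1 y i) (abs_nonneg _) (norm_nonneg _))
    _ = _ := by simp; ring

open Module in
/-- An isotropic subspace is contained in its orthogonal complement, which has complementary
dimension. -/
theorem finrank_le_of_isotropic (n : ℕ) (s : Set ((Fin n → ℝ) × (Fin n → ℝ)))
    (hs : ∀ x ∈ s, ∀ y ∈ s, symp n x y = 0) : finrank ℝ (Submodule.span ℝ s) ≤ n := by
  set V := Submodule.span ℝ s
  have hV : V ≤ (symp n).orthogonal V := by
    refine Submodule.span_le.2 fun y hy x hx => ?_
    change symp n x y = 0
    induction hx using Submodule.span_induction with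
    | mem x hx => exact hs x hx y hy
    | zero => simp
    | add x z _ _ h1 h2 => simp [h1, h2]
    | smul c x _ h => simp [h]
  have h1 := Submodule.finrank_mono hV
  rw [LinearMap.BilinForm.finrank_orthogonal (symp_nondegenerate n) V] at h1
  have h2 : finrank ℝ ((Fin n → ℝ) × (Fin n → ℝ)) = n + n := by simp
  omega

/-- The embedding of `ℤ²ⁿ` in `ℝⁿ × ℝⁿ` with coordinates `uᵢ / aᵢ` and `aᵢ (Lᵢ(u) - uₙ₊ᵢ)`, for which
the points counted by `N Z` are those of sup norm less than `Z`. -/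
noncomputable def scaleHom {n : ℕ} (γ : Fin n → Fin n → ℝ) (a : Fin n → ℝ) :
    (Fin n → ℤ) × (Fin n → ℤ) →+ (Fin n → ℝ) × (Fin n → ℝ) where
  toFun u := (fun i => (a i)⁻¹ * u.1 i, fun i => a i * ((∑ j, γ i j * (u.1 j : ℝ)) - (u.2 i : ℝ)))
  map_zero' := by ext i <;> simp
  map_add' u v := by
    ext i
    · simp; ring
    · simp [mul_add, Finset.sum_add_distrib]; ring

theorem norm_scaleHom_lt_iff {n : ℕ} (γ : Fin n → Fin n → ℝ) (a : Fin n → ℝ) (ha : ∀ i, 0 < a i)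
    {Z : ℝ} (hZ : 0 < Z) (u : (Fin n → ℤ) × (Fin n → ℤ)) :
    ‖scaleHom γ a u‖ < Z ↔ (∀ i, |(u.1 i : ℝ)| < a i * Z) ∧
      (∀ i, |(∑ j, γ i j * (u.1 j : ℝ)) - (u.2 i : ℝ)| < (a i)⁻¹ * Z) := by
  rw [Prod.norm_def, max_lt_iff, pi_norm_lt_iff hZ, pi_norm_lt_iff hZ]
  refine and_congr (forall_congr' fun i => ?_) (forall_congr' fun i => ?_)
  · simp only [scaleHom, AddMonoidHom.coe_mk, ZeroHom.coe_mk, Real.norm_eq_abs, abs_mul,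
      abs_inv, abs_of_pos (ha i)]
    rw [inv_mul_lt_iff₀ (ha i)]
  · simp only [scaleHom, AddMonoidHom.coe_mk, ZeroHom.coe_mk, Real.norm_eq_abs, abs_mul,
      abs_of_pos (ha i)]
    rw [lt_inv_mul_iff₀ (ha i)]

theorem finite_abs_lt (B : ℝ) : {k : ℤ | |(k : ℝ)| < B}.Finite := by
  refine (Set.finite_Icc (-⌈B⌉) ⌈B⌉).subset fun k (hk : |(k : ℝ)| < B) => ?_
  have := hk.trans_le (Int.le_ceil B)
  rw [abs_lt] at this
  exact ⟨by exact_mod_cast this.1.le, by exact_mod_cast this.2.le⟩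

theorem finite_norm_scaleHom_lt {n : ℕ} (γ : Fin n → Fin n → ℝ) (a : Fin n → ℝ)
    (ha : ∀ i, 0 < a i) {Z : ℝ} (hZ : 0 < Z) : {u | ‖scaleHom γ a u‖ < Z}.Finite := by
  have h1 : {v : Fin n → ℤ | ∀ i, v i ∈ {k : ℤ | |(k : ℝ)| < a i * Z}}.Finite :=
    Set.Finite.pi' fun i => finite_abs_lt _
  have h2 : {v : Fin n → ℤ | ∀ i, v i ∈ {k : ℤ | |(k : ℝ)| <
      (∑ j, |γ i j| * (a j * Z)) + (a i)⁻¹ * Z}}.Finite :=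
    Set.Finite.pi' fun i => finite_abs_lt _
  refine (h1.prod h2).subset fun u hu => ?_
  obtain ⟨hu1, hu2⟩ := (norm_scaleHom_lt_iff γ a ha hZ u).1 hu
  refine ⟨hu1, fun i => ?_⟩
  have h3 : |∑ j, γ i j * (u.1 j : ℝ)| ≤ ∑ j, |γ i j| * (a j * Z) :=
    (Finset.abs_sum_le_sum_abs _ _).trans <| Finset.sum_le_sum fun j _ => by
      rw [abs_mul]
      exact mul_le_mul_of_nonneg_left (hu1 j).le (abs_nonneg _)
  have h4 := hu2 i
  change |(u.2 i : ℝ)| < _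
  rw [abs_lt] at h4 ⊢
  rw [abs_le] at h3
  constructor <;> linarith [h4.1, h4.2, h3.1, h3.2]

/-- The terms `γ i j * uᵢ * wⱼ` cancel by symmetry of `γ`, leaving an integer. -/
theorem symp_scaleHom {n : ℕ} (γ : Fin n → Fin n → ℝ) (hγ : ∀ i j, γ i j = γ j i)
    (a : Fin n → ℝ) (ha : ∀ i, 0 < a i) (u w : (Fin n → ℤ) × (Fin n → ℤ)) :
    symp n (scaleHom γ a u) (scaleHom γ a w) =
      ((∑ i, (u.2 i * w.1 i - u.1 i * w.2 i) : ℤ) : ℝ) := by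
  have hsymm : ∑ i, (u.1 i : ℝ) * ∑ j, γ i j * (w.1 j : ℝ) =
      ∑ i, (w.1 i : ℝ) * ∑ j, γ i j * (u.1 j : ℝ) := by
    simp only [Finset.mul_sum]
    rw [Finset.sum_comm]
    refine Finset.sum_congr rfl fun i _ => Finset.sum_congr rfl fun j _ => ?_
    rw [hγ j i]; ring
  have hterm : ∀ i, (scaleHom γ a u).1 i * (scaleHom γ a w).2 i -
      (scaleHom γ a u).2 i * (scaleHom γ a w).1 i =
      ((u.1 i : ℝ) * ∑ j, γ i j * (w.1 j : ℝ)) - ((w.1 i : ℝ) * ∑ j, γ i j * (u.1 j : ℝ)) +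
        ((u.2 i : ℝ) * w.1 i - u.1 i * w.2 i) := by
    intro i
    have := (ha i).ne'
    simp only [scaleHom, AddMonoidHom.coe_mk, ZeroHom.coe_mk]
    field_simp
    ring
  rw [symp_apply, Finset.sum_congr rfl fun i _ => hterm i, Finset.sum_add_distrib,
    Finset.sum_sub_distrib, hsymm]
  simp

/-- Davenport's shrinking lemma for lopsided boxes
(Lemma 2.3 of Schindler–Sofos). -/
theorem shrinking_lemma (n : ℕ) (hn : 1 ≤ n) :
    ∃ C : ℝ, 0 < C ∧
      ∀ (γ : Fin n → Fin n → ℝ), (∀ i j, γ i j = γ j i) →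
      ∀ (a : Fin n → ℝ), (∀ i, 1 < a i) →
      ∀ N : ℝ → ℕ,
        (N = fun Z => Set.ncard {u : (Fin n → ℤ) × (Fin n → ℤ) |
          (∀ i, |(u.1 i : ℝ)| < a i * Z) ∧
          (∀ i, |(∑ j, γ i j * (u.1 j : ℝ)) - (u.2 i : ℝ)| < (a i)⁻¹ * Z)}) →
        ∀ Z₁ Z₂ : ℝ, 0 < Z₁ → Z₁ ≤ Z₂ → Z₂ ≤ 1 →
          (N Z₂ : ℝ) ≤ C * (Z₂ / Z₁) ^ n * (N Z₁ : ℝ) := by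
  have hn' : (1 : ℝ) ≤ n := by exact_mod_cast hn
  refine ⟨(3 * (2 * n)) ^ (n + n) * 3 ^ n, by positivity, ?_⟩
  intro γ hγ a ha1 N hN Z₁ Z₂ hZ1 hZ12 hZ2
  have ha : ∀ i, 0 < a i := fun i => one_pos.trans (ha1 i)
  have hNZ : ∀ Z, 0 < Z → N Z = {u | ‖scaleHom γ a u‖ < Z}.ncard := by
    intro Z hZ
    rw [hN]
    exact congrArg Set.ncard (Set.ext fun u => (norm_scaleHom_lt_iff γ a ha hZ u).symm)
  have hZ2pos : 0 < Z₂ := hZ1.trans_le hZ12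
  set Z := Z₂ / (2 * n) with hZdef
  have hZpos : 0 < Z := by positivity
  have hZle : Z ≤ Z₂ := div_le_self hZ2pos.le (by linarith)
  have hq : 1 ≤ Z₂ / Z₁ := (one_le_div hZ1).2 hZ12
  have step1 : (N Z₂ : ℝ) ≤ (3 * (2 * n)) ^ (n + n) * N Z := by
    have := card_le_of_mem_submodule (scaleHom γ a) ⊤ hZpos hZle
      (finite_norm_scaleHom_lt γ a ha hZ2pos) (fun _ _ => Submodule.mem_top)
    rw [← hNZ _ hZ2pos, ← hNZ _ hZpos, finrank_top] at this
    have h2 : Module.finrank ℝ ((Fin n → ℝ) × (Fin n → ℝ)) = n + n := by simp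
    have h3 : 3 * Z₂ / Z = 3 * (2 * n) := by rw [hZdef]; field_simp
    rwa [h2, h3] at this
  have step2 : (N Z : ℝ) ≤ 3 ^ n * (Z₂ / Z₁) ^ n * N Z₁ := by
    rcases le_total Z Z₁ with h | h
    · have hmono : N Z ≤ N Z₁ := by
        rw [hNZ _ hZpos, hNZ _ hZ1]
        exact Set.ncard_le_ncard (fun u (hu : _ < _) => hu.trans_le h)
          (finite_norm_scaleHom_lt γ a ha hZ1)
      have h1 : (1 : ℝ) ≤ 3 ^ n * (Z₂ / Z₁) ^ n :=
        one_le_mul_of_one_le_of_one_le (one_le_pow₀ (by norm_num)) (one_le_pow₀ hq)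
      calc (N Z : ℝ) ≤ 1 * N Z₁ := by rw [one_mul]; exact_mod_cast hmono
        _ ≤ _ := by gcongr
    · set V := Submodule.span ℝ (scaleHom γ a '' {u | ‖scaleHom γ a u‖ < Z})
      have hVdim : Module.finrank ℝ V ≤ n := by
        refine finrank_le_of_isotropic n _ ?_
        rintro _ ⟨u, hu, rfl⟩ _ ⟨w, hw, rfl⟩
        have hlt : |symp n (scaleHom γ a u) (scaleHom γ a w)| < 1 := by
          calc _ ≤ 2 * n * (‖scaleHom γ a u‖ * ‖scaleHom γ a w‖) := abs_symp_le _ _ _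
            _ ≤ 2 * n * (Z * Z) := by
              have := mul_le_mul (le_of_lt hu) (le_of_lt hw) (norm_nonneg _) hZpos.le
              gcongr
            _ = Z₂ * Z := by rw [hZdef]; field_simp
            _ ≤ 1 * Z := by gcongr
            _ < 1 := by
              rw [one_mul, hZdef, div_lt_one (by linarith)]
              linarith
        rw [symp_scaleHom γ hγ a ha] at hlt ⊢
        have hlt' : |∑ i, (u.2 i * w.1 i - u.1 i * w.2 i)| < 1 := by exact_mod_cast hlt
        rw [Int.abs_lt_one_iff.1 hlt', Int.cast_zero]
      have := card_le_of_mem_submodule (scaleHom γ a) V hZ1 h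
        (finite_norm_scaleHom_lt γ a ha hZpos)
        (fun u hu => Submodule.subset_span ⟨u, hu, rfl⟩)
      rw [← hNZ _ hZpos, ← hNZ _ hZ1] at this
      refine this.trans ?_
      rw [← mul_pow]
      have hbase : 3 * Z / Z₁ ≤ 3 * (Z₂ / Z₁) := by
        rw [mul_div_assoc]; gcongr
      have hone : 1 ≤ 3 * Z / Z₁ := (one_le_div hZ1).2 (by linarith)
      gcongr
      exact (pow_le_pow_right₀ hone hVdim).trans (pow_le_pow_left₀ (by linarith) hbase _)
  calc (N Z₂ : ℝ) ≤ (3 * (2 * n)) ^ (n + n) * N Z := step1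
    _ ≤ (3 * (2 * n)) ^ (n + n) * (3 ^ n * (Z₂ / Z₁) ^ n * N Z₁) := by gcongr
    _ = _ := by ring
end

section
/- Let n ∈ ℕ and suppose given real sequences λ_i^-, λ_i^+ : ℕ → ℝ for 1 ≤ i ≤ n such that for every m ∈ ℕ and every i one has (1*λ_i^-)(m) ≤ (1*μ)(m) ≤ (1*λ_i^+)(m). Then for every vector m = (m_1,…,m_n) ∈ ℕ^n one has Π_{i=1}^n (1*μ)(m_i) ≥ Σ_{i=1}^n (1*λ_i^-)(m_i)·Π_{j≠i} (1*λ_j^+)(m_j) - (n-1)·Π_{i=1}^n (1*λ_i^+)(m_i). -/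
/-!
Write `a i ≤ d i ≤ b i` for the convolutions of `1` with `λ_i^-`, `μ`, `λ_i^+` at `m i`. Since `d i`
is `0` or `1`, it is nonnegative, and the theorem is equivalent to the telescoping (Weierstrass
product) bound `∏ b - ∏ d ≤ ∑ i, (b i - a i) * ∏ j ≠ i, b j`, which is
`prod_sub_prod_le_sum`: each diagonal term `b i * ∏ j ≠ i, b j` equals the full product `∏ b`, so
the right-hand side is `n * ∏ b - ∑ i, a i * ∏ j ≠ i, b j`.
-/

/-- Replacing the factors `b i` by `d i` one at a time changes the product by at most the sum of
the individual changes, each bounded by `b i - a i` times the remaining factors `b j`. -/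
lemma prod_sub_prod_le_sum {ι : Type*} [DecidableEq ι] (s : Finset ι) (a d b : ι → ℝ)
    (had : ∀ i, a i ≤ d i) (hd : ∀ i, 0 ≤ d i) (hdb : ∀ i, d i ≤ b i) :
    ∏ i ∈ s, b i - ∏ i ∈ s, d i ≤ ∑ i ∈ s, (b i - a i) * ∏ j ∈ s.erase i, b j := by
  have hb : ∀ i, 0 ≤ b i := fun i => (hd i).trans (hdb i)
  induction s using Finset.induction_on with
  | empty => simp
  | insert k s hk ih =>
    have hsum : ∑ i ∈ s, (b i - a i) * ∏ j ∈ (insert k s).erase i, b j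
        = b k * ∑ i ∈ s, (b i - a i) * ∏ j ∈ s.erase i, b j := by
      rw [Finset.mul_sum]
      refine Finset.sum_congr rfl fun i hi => ?_
      have hki : k ≠ i := fun h => hk (h ▸ hi)
      rw [Finset.erase_insert_of_ne hki,
        Finset.prod_insert fun h => hk (Finset.mem_of_mem_erase h)]
      ring
    rw [Finset.prod_insert hk, Finset.prod_insert hk, Finset.sum_insert hk,
      Finset.erase_insert hk, hsum]
    have hB : 0 ≤ ∏ i ∈ s, b i := Finset.prod_nonneg fun i _ => hb i
    have hDB : ∏ i ∈ s, d i ≤ ∏ i ∈ s, b i :=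
      Finset.prod_le_prod (fun i _ => hd i) fun i _ => hdb i
    have h1 := mul_le_mul_of_nonneg_left ih (hb k)
    have h2 := mul_le_mul_of_nonneg_right (had k) hB
    have h3 := mul_le_mul_of_nonneg_right (hdb k) (sub_nonneg.2 hDB)
    linarith

/-- The convolution `1 * μ` is the indicator of `1`, hence nonnegative. -/
lemma sum_moebius_divisors_nonneg (m : ℕ) :
    0 ≤ ∑ e ∈ m.divisors, ((ArithmeticFunction.moebius e : ℤ) : ℝ) := by
  have h : ∑ e ∈ m.divisors, ArithmeticFunction.moebius e = if m = 1 then 1 else 0 := by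
    rw [← ArithmeticFunction.coe_mul_zeta_apply, ArithmeticFunction.moebius_mul_coe_zeta,
      ArithmeticFunction.one_apply]
  rw [← Int.cast_sum, h]
  split_ifs <;> simp

/-- the multidimensional vector sieve inequality
(Lemma 5.1 of Schindler–Sofos). -/
theorem multidimensional_vector_sieve
    (n : ℕ) (lamMinus lamPlus : Fin n → ℕ → ℝ)
    (hsieve : ∀ i : Fin n, ∀ m : ℕ, 1 ≤ m →
      (∑ e ∈ m.divisors, lamMinus i e) ≤
        (∑ e ∈ m.divisors, ((ArithmeticFunction.moebius e : ℤ) : ℝ)) ∧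
      (∑ e ∈ m.divisors, ((ArithmeticFunction.moebius e : ℤ) : ℝ)) ≤
        ∑ e ∈ m.divisors, lamPlus i e) :
    ∀ m : Fin n → ℕ, (∀ i, 1 ≤ m i) →
      (∑ i : Fin n, (∑ e ∈ (m i).divisors, lamMinus i e) *
          ∏ j ∈ Finset.univ.erase i, (∑ e ∈ (m j).divisors, lamPlus j e)) -
        ((n : ℝ) - 1) * ∏ i : Fin n, (∑ e ∈ (m i).divisors, lamPlus i e) ≤
      ∏ i : Fin n, (∑ e ∈ (m i).divisors, ((ArithmeticFunction.moebius e : ℤ) : ℝ)) := by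
  intro m hm
  have key := prod_sub_prod_le_sum Finset.univ
    (fun i => ∑ e ∈ (m i).divisors, lamMinus i e)
    (fun i => ∑ e ∈ (m i).divisors, ((ArithmeticFunction.moebius e : ℤ) : ℝ))
    (fun i => ∑ e ∈ (m i).divisors, lamPlus i e)
    (fun i => (hsieve i (m i) (hm i)).1)
    (fun i => sum_moebius_divisors_nonneg (m i))
    (fun i => (hsieve i (m i) (hm i)).2)
  simp only [sub_mul, Finset.sum_sub_distrib, Finset.mul_prod_erase Finset.univ
    (fun i => ∑ e ∈ (m i).divisors, lamPlus i e) (Finset.mem_univ _), Finset.sum_const,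
    Finset.card_univ, Fintype.card_fin, nsmul_eq_mul] at key
  linarith
end
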